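/- Let G be a stochastic game with terminal set T. Then G is stopping under fairness if and only if ∃Pre*_f(V∖∀Pre*_f(T)) = ∅. -/

import Mathlib

/-!
`∃Pre*_f (V ∖ W)` contains `V ∖ W`, and it is empty when `V ∖ W` is, so the right-hand side says
exactly that `W = V`, where `W = ∀Pre*_f (T)`.

The probabilistic ingredient is `ae_infOcc_of_step`: if the transition `v → v'` has the same
positive probability `p` after every history that ends in `v`, then almost surely `v` occurring
infinitely often implies `v'` occurring infinitely often. It follows from Lévy's conditional
Borel–Cantelli lemma, since the conditional probability of taking `v → v'` at time `k` is
`p · 1[ω k = v]` (`condExp_transition`).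

If `W = V`: almost every play against a fair `σ2` follows edges of the game, is fair at the vertices
of Player 2 by assumption and at the probabilistic vertices by the lemma. If such a play
never reaches `T`, the complement of `inf(ω)` contains `T` and is closed under `∀Pre_f`, so it
contains `W = V`; but `inf(ω)` is nonempty because `V` is finite.

If some `v₀ ∉ W`: Player 2 plays uniformly over successors, which is fair by the same lemma, and
Player 1 always picks a successor outside `W` when there is one. Almost surely the play from `v₀`
never enters `W ⊇ T`. A path measure for this pair of memoryless strategies is obtained by
iterating independent random maps `V → V` (`exists_isPathMeasure`).
-/


open MeasureTheory
open scoped ENNReal Classical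

/-- A turn-based two-player stochastic game on a finite vertex set `V`. -/
structure StochGame (V : Type*) [Fintype V] where
  /-- Player 1 vertices -/
  V1 : Finset V
  /-- Player 2 vertices -/
  V2 : Finset V
  /-- probabilistic vertices -/
  VP : Finset V
  cover : ∀ v : V, v ∈ V1 ∨ v ∈ V2 ∨ v ∈ VP
  disj12 : ∀ v : V, ¬(v ∈ V1 ∧ v ∈ V2)
  disj1P : ∀ v : V, ¬(v ∈ V1 ∧ v ∈ VP)
  disj2P : ∀ v : V, ¬(v ∈ V2 ∧ v ∈ VP)
  /-- the probabilistic transition function -/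
  δ : V → V → ℝ
  δ_nonneg : ∀ v v', 0 ≤ δ v v'
  δ_le_one : ∀ v v', δ v v' ≤ 1
  det : ∀ v : V, (v ∈ V1 ∨ v ∈ V2) → ∀ v', δ v v' = 0 ∨ δ v v' = 1
  prob : ∀ v ∈ VP, ∑ v' : V, δ v v' = 1
  post_nonempty : ∀ v : V, ∃ v', 0 < δ v v'

namespace StochGame

variable {V : Type*} [Fintype V]

/-- successors of a vertex -/
def post (G : StochGame V) (v : V) : Set V := {v' | 0 < G.δ v v'}

/-- a vertex is terminal if `δ(v,v) = 1` and `δ(v,v') = 0` for `v' ≠ v`. -/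
def Terminal (G : StochGame V) (v : V) : Prop :=
  G.δ v v = 1 ∧ ∀ v', v' ≠ v → G.δ v v' = 0

/-- A strategy for the player owning the vertices in `P`: a function assigning to each
finite history and current vertex a probability distribution over vertices, supported
on successors when the current vertex belongs to `P`. -/
structure Strategy (G : StochGame V) (P : Finset V) where
  f : List V → V → V → ℝ
  nonneg : ∀ h v v', 0 ≤ f h v v'
  sum_one : ∀ h v, ∑ v' : V, f h v v' = 1
  support : ∀ h v, v ∈ P → ∀ v', 0 < f h v v' → 0 < G.δ v v'

variable {G : StochGame V} {P : Finset V}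

/-- a memoryless strategy only depends on the current vertex -/
def Strategy.Memoryless (σ : Strategy G P) : Prop :=
  ∀ h h' cur, σ.f h cur = σ.f h' cur

/-- a deterministic (pure) strategy takes Dirac distributions as values -/
def Strategy.Deterministic (σ : Strategy G P) : Prop :=
  ∀ h cur, ∃ v', ∀ u, σ.f h cur u = if u = v' then 1 else 0

/-- a semi-Markov strategy depends only on the initial vertex, the number of elapsed
steps and the current vertex -/
def Strategy.SemiMarkov (σ : Strategy G P) : Prop :=
  ∀ (v0 : V) (h h' : List V) (cur : V), h.length = h'.length →
    σ.f (v0 :: h) cur = σ.f (v0 :: h') cur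

variable [DecidableEq V]

/-- one-step transition probability given strategies of both players -/
noncomputable def step (G : StochGame V) (σ1 : Strategy G G.V1) (σ2 : Strategy G G.V2)
    (h : List V) (v v' : V) : ℝ :=
  if v ∈ G.V1 then σ1.f h v v' else if v ∈ G.V2 then σ2.f h v v' else G.δ v v'

/-- the history consisting of the first `i` vertices of `w` -/
def hist (w : ℕ → V) (i : ℕ) : List V := (List.range i).map w

/-- probability that the play starts with the vertices `w 0, w 1, …, w n` when
the game starts at `v` and the players use strategies `σ1`, `σ2`. -/
noncomputable def prefixProb (G : StochGame V) (σ1 : Strategy G G.V1) (σ2 : Strategy G G.V2)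
    (v : V) (n : ℕ) (w : ℕ → V) : ℝ :=
  (if w 0 = v then 1 else 0) *
    ∏ i ∈ Finset.range n, G.step σ1 σ2 (hist w i) (w i) (w (i + 1))

/-- the cylinder of all infinite plays agreeing with `w` on the first `n+1` coordinates -/
def cyl (n : ℕ) (w : ℕ → V) : Set (ℕ → V) := {ω | ∀ i ≤ n, ω i = w i}

variable [MeasurableSpace V]

/-- `μ` is the path measure of the game `G` starting at `v` under strategies `σ1, σ2`:
it is the (unique) probability measure on `V^ω` (with the product σ-algebra) whose
cylinder probabilities are given by the products of the transition probabilities. -/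
def IsPathMeasure (G : StochGame V) (σ1 : Strategy G G.V1) (σ2 : Strategy G G.V2)
    (v : V) (μ : Measure (ℕ → V)) : Prop :=
  IsProbabilityMeasure μ ∧
    ∀ (n : ℕ) (w : ℕ → V), μ (cyl n w) = ENNReal.ofReal (G.prefixProb σ1 σ2 v n w)

/-- the set of vertices occurring infinitely often in a play -/
def infOcc (ω : ℕ → V) : Set V := {u | ∀ N, ∃ n, N ≤ n ∧ ω n = u}

/-- the set of plays that are fair for Player 2 -/
def FP2 (G : StochGame V) : Set (ℕ → V) :=
  {ω | ∀ u ∈ G.V2, u ∈ infOcc ω → ∀ u' ∈ G.post u, u' ∈ infOcc ω}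

/-- the event `◇T` that a terminal vertex is reached -/
def ReachT (G : StochGame V) : Set (ℕ → V) := {ω | ∃ i, G.Terminal (ω i)}

/-- A Player 2 strategy is (almost surely) fair if the fair plays have probability 1
under any Player 1 strategy and any initial vertex. -/
def Fair (G : StochGame V) (σ2 : Strategy G G.V2) : Prop :=
  ∀ (σ1 : Strategy G G.V1) (v : V) (μ : Measure (ℕ → V)),
    G.IsPathMeasure σ1 σ2 v μ → μ G.FP2 = 1

/-- `G` is stopping under fairness: a terminal vertex is reached almost surely
whenever Player 2 plays a fair strategy. -/
def StoppingUnderFairness (G : StochGame V) : Prop :=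
  ∀ (σ1 : Strategy G G.V1) (σ2 : Strategy G G.V2), G.Fair σ2 →
    ∀ (v : V) (μ : Measure (ℕ → V)), G.IsPathMeasure σ1 σ2 v μ → μ G.ReachT = 1

/-- the total accumulated reward of a play -/
noncomputable def rew (r : V → ℝ) (ω : ℕ → V) : ℝ≥0∞ := ∑' i, ENNReal.ofReal (r (ω i))

/-- the expected total reward -/
noncomputable def expRew (μ : Measure (ℕ → V)) (r : V → ℝ) : ℝ≥0∞ := ∫⁻ ω, rew r ω ∂μ

end StochGame

namespace StochGame

variable {V : Type*} [Fintype V]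

/-- `δ(v,C) = Σ_{v' ∈ C} δ(v,v')` -/
noncomputable def deltaSet (G : StochGame V) (v : V) (C : Set V) : ℝ :=
  ∑ v' : V, if v' ∈ C then G.δ v v' else 0

/-- `∃Pre_f(C)` -/
noncomputable def existsPre (G : StochGame V) (C : Set V) : Set V :=
  {v | 0 < G.deltaSet v C}

/-- `∀Pre_f(C)` -/
noncomputable def forallPre (G : StochGame V) (C : Set V) : Set V :=
  {v | (v ∈ G.V2 ∨ v ∈ G.VP) ∧ 0 < G.deltaSet v C} ∪ {v | v ∈ G.V1 ∧ G.post v ⊆ C}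

/-- `F*(C)`: the least set `X` with `C ⊆ X` and `F(X) ⊆ X`. -/
def preStar (F : Set V → Set V) (C : Set V) : Set V := ⋂₀ {X | C ⊆ X ∧ F X ⊆ X}

end StochGame

namespace StochGame

open Filter Preorder

set_option linter.unusedSectionVars false

variable {V : Type*} [Fintype V] [DecidableEq V]

/-! ### Cylinders and transition probabilities -/

lemma step_nonneg (G : StochGame V) (σ1 : Strategy G G.V1) (σ2 : Strategy G G.V2)
    (h : List V) (v v' : V) : 0 ≤ G.step σ1 σ2 h v v' := by
  unfold step
  split_ifs
  · exact σ1.nonneg _ _ _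
  · exact σ2.nonneg _ _ _
  · exact G.δ_nonneg _ _

lemma step_pos_imp (G : StochGame V) (σ1 : Strategy G G.V1) (σ2 : Strategy G G.V2)
    (h : List V) (v v' : V) (hs : 0 < G.step σ1 σ2 h v v') : 0 < G.δ v v' := by
  unfold step at hs
  split_ifs at hs with h1 h2
  · exact σ1.support _ _ h1 _ hs
  · exact σ2.support _ _ h2 _ hs
  · exact hs

lemma prefixProb_nonneg (G : StochGame V) (σ1 : Strategy G G.V1) (σ2 : Strategy G G.V2)
    (v : V) (n : ℕ) (w : ℕ → V) : 0 ≤ G.prefixProb σ1 σ2 v n w := by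
  unfold prefixProb
  refine mul_nonneg ?_ (Finset.prod_nonneg fun i _ => step_nonneg _ _ _ _ _ _)
  split_ifs <;> simp

lemma prefixProb_succ (G : StochGame V) (σ1 : Strategy G G.V1) (σ2 : Strategy G G.V2)
    (v : V) (n : ℕ) (w : ℕ → V) :
    G.prefixProb σ1 σ2 v (n + 1) w =
      G.prefixProb σ1 σ2 v n w * G.step σ1 σ2 (hist w n) (w n) (w (n + 1)) := by
  unfold prefixProb
  rw [Finset.prod_range_succ, mul_assoc]

lemma hist_congr {w w' : ℕ → V} {n : ℕ} (h : ∀ i < n, w i = w' i) : hist w n = hist w' n := by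
  unfold hist
  exact List.map_congr_left fun i hi => h i (List.mem_range.1 hi)

lemma prefixProb_congr (G : StochGame V) (σ1 : Strategy G G.V1) (σ2 : Strategy G G.V2)
    (v : V) {n : ℕ} {w w' : ℕ → V} (h : ∀ i ≤ n, w i = w' i) :
    G.prefixProb σ1 σ2 v n w = G.prefixProb σ1 σ2 v n w' := by
  unfold prefixProb
  rw [h 0 (Nat.zero_le _)]
  congr 1
  refine Finset.prod_congr rfl fun i hi => ?_
  have hi' := Finset.mem_range.1 hi
  rw [h i hi'.le, h (i + 1) hi', hist_congr fun j hj => h j (by lia)]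

variable [MeasurableSpace V]

/-- Almost every play only has prefixes of positive probability: there are finitely many cylinders
of each length, and those of measure zero may be discarded. -/
lemma ae_prefixProb_pos {G : StochGame V} {σ1 : Strategy G G.V1} {σ2 : Strategy G G.V2} {v : V}
    {μ : Measure (ℕ → V)} (hμ : G.IsPathMeasure σ1 σ2 v μ) :
    ∀ᵐ ω ∂μ, ∀ n, 0 < G.prefixProb σ1 σ2 v n ω := by
  rw [ae_all_iff]
  intro n
  -- a word of length `n + 1` is turned into a play by repeating its first letter
  let e : (Set.Iic n → V) → ℕ → V := fun f j => if h : j ≤ n then f ⟨j, h⟩ else f ⟨0, Nat.zero_le _⟩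
  have key : ∀ᵐ ω ∂μ, ∀ f : Set.Iic n → V, μ (cyl n (e f)) = 0 → ω ∉ cyl n (e f) := by
    rw [ae_all_iff]
    intro f
    by_cases h : μ (cyl n (e f)) = 0
    · filter_upwards [measure_eq_zero_iff_ae_notMem.1 h] with ω hω _ using hω
    · exact Eventually.of_forall fun ω h' => absurd h' h
  filter_upwards [key] with ω hω
  have hmem : ω ∈ cyl n (e (restrictLe n ω)) := by
    intro i hi
    simp [e, hi]
  by_contra hneg
  have h0 : G.prefixProb σ1 σ2 v n ω = 0 :=
    le_antisymm (not_lt.1 hneg) (prefixProb_nonneg _ _ _ _ _ _)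
  refine hω _ ?_ hmem
  rw [hμ.2, ← prefixProb_congr G σ1 σ2 v hmem, h0, ENNReal.ofReal_zero]

lemma ae_start {G : StochGame V} {σ1 : Strategy G G.V1} {σ2 : Strategy G G.V2} {v : V}
    {μ : Measure (ℕ → V)} (hμ : G.IsPathMeasure σ1 σ2 v μ) : ∀ᵐ ω ∂μ, ω 0 = v := by
  filter_upwards [ae_prefixProb_pos hμ] with ω hω
  by_contra h
  have := hω 0
  simp [prefixProb, h] at this

lemma ae_step_pos {G : StochGame V} {σ1 : Strategy G G.V1} {σ2 : Strategy G G.V2} {v : V}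
    {μ : Measure (ℕ → V)} (hμ : G.IsPathMeasure σ1 σ2 v μ) :
    ∀ᵐ ω ∂μ, ∀ n, 0 < G.step σ1 σ2 (hist ω n) (ω n) (ω (n + 1)) := by
  filter_upwards [ae_prefixProb_pos hμ] with ω hω n
  have := hω (n + 1)
  rw [prefixProb_succ] at this
  exact (pos_iff_pos_of_mul_pos this).1 (hω n)

variable [DiscreteMeasurableSpace V]

/-! ### Conditional probability of a transition -/

/-- The event that the transition `v → v'` is taken at time `k`. -/
def transition (v v' : V) (k : ℕ) : Set (ℕ → V) := {ω | ω k = v ∧ ω (k + 1) = v'}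

lemma measurableSet_coord (k : ℕ) (v : V) : MeasurableSet {ω : ℕ → V | ω k = v} := by
  have h := measurableSet_preimage (measurable_pi_apply (X := fun _ : ℕ => V) k)
    (measurableSet_singleton v)
  exact h

lemma measurableSet_piLE_coord {k n : ℕ} (h : k ≤ n) (v : V) :
    MeasurableSet[Filtration.piLE (X := fun _ : ℕ => V) n] {ω : ℕ → V | ω k = v} := by
  have hm := measurableSet_preimage
    (measurable_pi_apply (X := fun _ : Set.Iic n => V) (⟨k, h⟩ : Set.Iic n))
    (measurableSet_singleton v)
  exact ⟨_, hm, rfl⟩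

/-- If `v → v'` has probability `p` after every history, then given an event `A` that depends only
on the times `0, …, k`, and given `ω k = v`, the transition is taken at time `k` with
probability `p`. -/
lemma measure_inter_transition {G : StochGame V} {σ1 : Strategy G G.V1} {σ2 : Strategy G G.V2}
    {v₀ : V} {μ : Measure (ℕ → V)} (hμ : G.IsPathMeasure σ1 σ2 v₀ μ) {v v' : V} {p : ℝ}
    (hp : ∀ h, G.step σ1 σ2 h v v' = p) (k : ℕ) {A : Set (ℕ → V)}
    (hA : MeasurableSet[Filtration.piLE (X := fun _ : ℕ => V) k] A) :
    μ (A ∩ transition v v' k) = ENNReal.ofReal p * μ (A ∩ {ω | ω k = v}) := by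
  obtain ⟨S, hS, rfl⟩ := hA
  have hr : Measurable (restrictLe (π := fun _ : ℕ => V) k) := measurable_restrictLe k
  -- both sides are measures in `S` on the finite space of words, so words may be compared singly
  have key : (μ.restrict (transition v v' k)).map (restrictLe (π := fun _ : ℕ => V) k) =
      ENNReal.ofReal p • (μ.restrict {ω | ω k = v}).map (restrictLe (π := fun _ : ℕ => V) k) := by
    refine Measure.ext_of_singleton fun f => ?_
    have hm := hr (measurableSet_singleton f)
    rw [Measure.map_apply hr (measurableSet_singleton f), Measure.smul_apply,
      Measure.map_apply hr (measurableSet_singleton f), Measure.restrict_apply hm,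
      Measure.restrict_apply hm, smul_eq_mul]
    by_cases hv : f ⟨k, le_refl k⟩ = v
    · let w : ℕ → V := fun j => if h : j ≤ k then f ⟨j, h⟩ else v'
      have hwk : w k = v := by simpa [w] using hv
      have hw1 : w (k + 1) = v' := by simp [w]
      have e2 : restrictLe (π := fun _ : ℕ => V) k ⁻¹' {f} ∩ {ω | ω k = v} = cyl k w := by
        ext ω
        constructor
        · rintro ⟨rfl, -⟩ i hi
          simp [w, hi]
        · intro h
          refine ⟨?_, (h k le_rfl).trans hwk⟩
          funext i
          have := h i i.2
          have hi : (i : ℕ) ≤ k := i.2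
          simpa [w, hi] using this
      have e1 : restrictLe (π := fun _ : ℕ => V) k ⁻¹' {f} ∩ transition v v' k
          = cyl (k + 1) w := by
        have : restrictLe (π := fun _ : ℕ => V) k ⁻¹' {f} ∩ transition v v' k
          = cyl k w ∩ {ω | ω (k + 1) = v'} := by
          rw [← e2, Set.inter_assoc]; rfl
        rw [this]
        ext ω
        constructor
        · rintro ⟨h, h'⟩ i hi
          rcases Nat.le_succ_iff.1 hi with hi | rfl
          · exact h i hi
          · exact h'.trans hw1.symm
        · intro h
          exact ⟨fun i hi => h i (by lia), (h _ le_rfl).trans hw1⟩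
      rw [e1, e2, hμ.2, hμ.2, prefixProb_succ, hwk, hw1, hp,
        ENNReal.ofReal_mul (prefixProb_nonneg _ _ _ _ _ _), mul_comm]
    · have e2 : restrictLe (π := fun _ : ℕ => V) k ⁻¹' {f} ∩ {ω | ω k = v} = ∅ := by
        ext ω
        simp only [Set.mem_inter_iff, Set.mem_preimage, Set.mem_singleton_iff, Set.mem_ofPred_eq,
          Set.mem_empty_iff_false, iff_false, not_and]
        rintro rfl
        exact hv
      have e1 : restrictLe (π := fun _ : ℕ => V) k ⁻¹' {f} ∩ transition v v' k = ∅ :=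
        Set.subset_eq_empty (Set.inter_subset_inter_right _ fun ω h => h.1) e2
      rw [e1, e2]
      simp
  have := congrArg (fun ν => ν S) key
  simpa only [Measure.smul_apply, smul_eq_mul, Measure.map_apply hr hS,
    Measure.restrict_apply (hr hS)] using this

lemma condExp_transition {G : StochGame V} {σ1 : Strategy G G.V1} {σ2 : Strategy G G.V2}
    {v₀ : V} {μ : Measure (ℕ → V)} [IsProbabilityMeasure μ]
    (hμ : G.IsPathMeasure σ1 σ2 v₀ μ) {v v' : V} {p : ℝ}
    (hp : ∀ h, G.step σ1 σ2 h v v' = p) (k : ℕ) :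
    {ω : ℕ → V | ω k = v}.indicator (fun _ => p) =ᵐ[μ]
      μ[(transition v v' k).indicator (1 : (ℕ → V) → ℝ) |
        Filtration.piLE (X := fun _ : ℕ => V) k] := by
  have hp0 : 0 ≤ p := hp [] ▸ step_nonneg _ _ _ _ _ _
  have hT : MeasurableSet (transition v v' k) :=
    (measurableSet_coord k v).inter (measurableSet_coord (k + 1) v')
  have hC := measurableSet_coord (V := V) k v
  have hle := (Filtration.piLE (X := fun _ : ℕ => V)).le k
  refine ae_eq_condExp_of_forall_setIntegral_eq hle ?_ ?_ ?_ ?_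
  · exact (integrable_const (1 : ℝ)).indicator hT
  · exact fun s _ _ => ((integrable_const p).indicator hC).integrableOn
  · intro s hs _
    rw [setIntegral_indicator hC, setIntegral_indicator hT]
    simp only [setIntegral_const, Pi.one_apply, smul_eq_mul, mul_one]
    rw [measureReal_def, measureReal_def, measure_inter_transition hμ hp k hs, ENNReal.toReal_mul,
      ENNReal.toReal_ofReal hp0, mul_comm]
  · exact (stronglyMeasurable_const.indicator
      (measurableSet_piLE_coord le_rfl v)).aestronglyMeasurable

/-- A transition of constant positive probability is almost surely taken infinitely often when
its source is visited infinitely often. -/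
lemma ae_infOcc_of_step {G : StochGame V} {σ1 : Strategy G G.V1} {σ2 : Strategy G G.V2}
    {v₀ : V} {μ : Measure (ℕ → V)} (hμ : G.IsPathMeasure σ1 σ2 v₀ μ) {v v' : V} {p : ℝ}
    (hp0 : 0 < p) (hp : ∀ h, G.step σ1 σ2 h v v' = p) :
    ∀ᵐ ω ∂μ, v ∈ infOcc ω → v' ∈ infOcc ω := by
  have := hμ.1
  -- the transition into time `n`, so that the event is known at time `n`; `n = 0` is irrelevant
  let s : ℕ → Set (ℕ → V) := fun n => {ω | ω (n - 1) = v ∧ ω n = v'}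
  have hs : ∀ n, MeasurableSet[Filtration.piLE (X := fun _ : ℕ => V) n] (s n) := fun n =>
    MeasurableSet.inter (measurableSet_piLE_coord (Nat.sub_le _ _) v)
      (measurableSet_piLE_coord le_rfl v')
  have hce : ∀ᵐ ω ∂μ, ∀ k, {ω : ℕ → V | ω k = v}.indicator (fun _ => p) ω =
      (μ[(s (k + 1)).indicator (1 : (ℕ → V) → ℝ) |
        Filtration.piLE (X := fun _ : ℕ => V) k]) ω :=
    ae_all_iff.2 fun k => condExp_transition hμ hp k
  filter_upwards [ae_mem_limsup_atTop_iff μ hs, hce] with ω h1 h2 hv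
  simp_rw [← h2] at h1
  have hfreq : ∃ᶠ n in atTop, ω ∈ s n := by
    rw [← mem_limsup_iff_frequently_mem, h1, ← not_summable_iff_tendsto_nat_atTop_of_nonneg]
    · intro hsum
      obtain ⟨N, hN⟩ := eventually_atTop.1
        ((hsum.tendsto_atTop_zero).eventually (gt_mem_nhds hp0))
      obtain ⟨n, hn, hnv⟩ := hv N
      have := hN n hn
      rw [Set.indicator_of_mem (show ω ∈ {ω : ℕ → V | ω n = v} from hnv)] at this
      exact lt_irrefl _ this
    · exact fun n => Set.indicator_nonneg (fun _ _ => hp0.le) _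
  intro N
  obtain ⟨n, hn, hns⟩ := frequently_atTop.1 hfreq N
  exact ⟨n, hn, hns.2⟩

lemma measurableSet_FP2 (G : StochGame V) : MeasurableSet (FP2 G) := by
  have hI : ∀ u : V, MeasurableSet {ω : ℕ → V | u ∈ infOcc ω} := by
    intro u
    have : {ω : ℕ → V | u ∈ infOcc ω} = ⋂ N : ℕ, ⋃ n : ℕ, {ω | N ≤ n ∧ ω n = u} := by
      ext ω
      simp [infOcc]
    rw [this]
    refine MeasurableSet.iInter fun N => MeasurableSet.iUnion fun n => ?_
    exact (MeasurableSet.const _).inter (measurableSet_coord n u)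
  have : FP2 G = ⋂ u : V, ⋂ u' : V, {ω : ℕ → V | u ∈ G.V2 ∧ u' ∈ G.post u}ᶜ ∪
      ({ω : ℕ → V | u ∈ infOcc ω}ᶜ ∪ {ω : ℕ → V | u' ∈ infOcc ω}) := by
    ext ω
    simp only [FP2, Set.mem_ofPred_eq, Set.mem_iInter, Set.mem_union, Set.mem_compl_iff]
    refine forall_congr' fun u => ?_
    constructor
    · intro h u'
      by_cases h1 : u ∈ G.V2 <;> by_cases h2 : u' ∈ G.post u <;> by_cases h3 : u ∈ infOcc ω <;>
        simp_all
    · intro h h1 h2 u' h3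
      have := h u'
      tauto
  rw [this]
  refine MeasurableSet.iInter fun u => MeasurableSet.iInter fun x => ?_
  exact (MeasurableSet.const _).compl.union ((hI u).compl.union (hI x))

/-! ### The attractor of the terminal vertices -/

lemma subset_preStar (F : Set V → Set V) (C : Set V) : C ⊆ preStar F C :=
  Set.subset_sInter fun _ h => h.1

lemma deltaSet_pos_iff (G : StochGame V) (v : V) (C : Set V) :
    0 < G.deltaSet v C ↔ ∃ v' ∈ C, 0 < G.δ v v' := by
  unfold deltaSet
  rw [Finset.sum_pos_iff_of_nonneg]
  · constructor
    · rintro ⟨u, -, hu⟩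
      split_ifs at hu with h
      · exact ⟨u, h, hu⟩
      · exact absurd hu (lt_irrefl _)
    · rintro ⟨u, h, hu⟩
      exact ⟨u, Finset.mem_univ _, by rwa [if_pos h]⟩
  · intro u _
    split_ifs
    · exact G.δ_nonneg _ _
    · exact le_rfl

lemma forallPre_mono (G : StochGame V) {C D : Set V} (h : C ⊆ D) :
    G.forallPre C ⊆ G.forallPre D := by
  rintro v (⟨hv, hp⟩ | ⟨hv, hp⟩)
  · rw [deltaSet_pos_iff] at hp
    obtain ⟨u, hu, hp⟩ := hp
    exact Or.inl ⟨hv, (deltaSet_pos_iff _ _ _).2 ⟨u, h hu, hp⟩⟩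
  · exact Or.inr ⟨hv, hp.trans h⟩

lemma forallPre_preStar_subset (G : StochGame V) (C : Set V) :
    G.forallPre (preStar G.forallPre C) ⊆ preStar G.forallPre C := by
  refine Set.subset_sInter fun X hX => ?_
  exact (forallPre_mono G (Set.sInter_subset_of_mem hX)).trans hX.2

lemma existsPreStar_compl_eq_empty_iff (G : StochGame V) (W : Set V) :
    preStar G.existsPre (Set.univ \ W) = ∅ ↔ W = Set.univ := by
  constructor
  · intro h
    have := subset_preStar G.existsPre (Set.univ \ W)
    rw [h, Set.subset_empty_iff, Set.sdiff_eq_empty] at this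
    exact Set.univ_subset_iff.1 this
  · rintro rfl
    refine Set.subset_empty_iff.1 (Set.sInter_subset_of_mem ⟨by simp, ?_⟩)
    intro v hv
    obtain ⟨u, hu, -⟩ := (deltaSet_pos_iff G v ∅).1 hv
    exact hu

lemma infOcc_nonempty (ω : ℕ → V) : (infOcc ω).Nonempty := by
  by_contra h
  rw [Set.not_nonempty_iff_eq_empty] at h
  have : ∀ u : V, ∃ N, ∀ n, N ≤ n → ω n ≠ u := by
    intro u
    have hu : u ∉ infOcc ω := by simp [h]
    simpa [infOcc] using hu
  choose N hN using this
  exact hN (ω (Finset.univ.sup N)) _ (Finset.le_sup (Finset.mem_univ _)) rfl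

/-- Pigeonhole on the finitely many successors of `u`. -/
lemma exists_post_infOcc (G : StochGame V) {ω : ℕ → V} (hω : ∀ n, 0 < G.δ (ω n) (ω (n + 1)))
    {u : V} (hu : u ∈ infOcc ω) : ∃ u' ∈ G.post u, u' ∈ infOcc ω := by
  by_contra! h
  have : ∀ u' : V, ∃ N, u' ∈ G.post u → ∀ n, N ≤ n → ω n ≠ u' := by
    intro u'
    by_cases h' : u' ∈ G.post u
    · have := h u' h'
      simp only [infOcc, Set.mem_ofPred_eq, not_forall, not_exists, not_and] at this
      obtain ⟨N, hN⟩ := this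
      exact ⟨N, fun _ => hN⟩
    · exact ⟨0, fun h'' => absurd h'' h'⟩
  choose N hN using this
  obtain ⟨n, hn, hnu⟩ := hu (Finset.univ.sup N)
  refine hN (ω (n + 1)) ?_ (n + 1)
    (((Finset.le_sup (Finset.mem_univ _)).trans hn).trans (Nat.le_succ _)) rfl
  have := hω n
  rwa [hnu] at this

/-- The deterministic half of the sufficiency proof: if `ω` avoided `T`, the complement of `inf(ω)`
would contain `T` and be closed under `∀Pre_f`, hence be everything. -/
lemma mem_reachT (G : StochGame V) (hW : preStar G.forallPre {u | G.Terminal u} = Set.univ)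
    {ω : ℕ → V} (hω : ∀ n, 0 < G.δ (ω n) (ω (n + 1)))
    (hfair : ∀ u, u ∈ G.V2 ∨ u ∈ G.VP → u ∈ infOcc ω → ∀ u' ∈ G.post u, u' ∈ infOcc ω) :
    ω ∈ ReachT G := by
  by_contra hT
  have hsub : preStar G.forallPre {u | G.Terminal u} ⊆ (infOcc ω)ᶜ := by
    refine Set.sInter_subset_of_mem ⟨fun u hu hI => ?_, ?_⟩
    · obtain ⟨n, -, rfl⟩ := hI 0
      exact hT ⟨n, hu⟩
    · rintro u (⟨hu, hp⟩ | ⟨hu, hp⟩) hI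
      · obtain ⟨u', hu', hδ⟩ := (deltaSet_pos_iff _ _ _).1 hp
        exact hu' (hfair u hu hI u' hδ)
      · obtain ⟨u', h1, h2⟩ := exists_post_infOcc G hω hI
        exact hp h1 h2
  obtain ⟨u, hu⟩ := infOcc_nonempty ω
  rw [hW] at hsub
  exact hsub (Set.mem_univ u) hu

/-! ### Existence of a path measure for memoryless strategies -/

/-- The trajectory from `v` obtained by applying, at time `n` and vertex `u`, the move
`f (n, u)`. -/
def traj (v : V) (f : ℕ × V → V) : ℕ → V
  | 0 => v
  | n + 1 => f (n, traj v f n)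

lemma measurable_traj (v : V) : Measurable (traj v : (ℕ × V → V) → ℕ → V) := by
  refine measurable_pi_lambda _ fun n => ?_
  induction n with
  | zero => exact measurable_const
  | succ n ih =>
    have h : Measurable fun q : V × (ℕ × V → V) => q.2 (n, q.1) :=
      measurable_from_prod_countable_right fun u => measurable_pi_apply (n, u)
    exact h.comp (ih.prodMk measurable_id)

lemma mem_cyl_traj_iff (v : V) (n : ℕ) (w : ℕ → V) (f : ℕ × V → V) :
    traj v f ∈ cyl n w ↔ w 0 = v ∧ ∀ i < n, f (i, w i) = w (i + 1) := by
  constructor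
  · intro h
    refine ⟨(h 0 (Nat.zero_le _)).symm, fun i hi => ?_⟩
    rw [← h i hi.le, ← h (i + 1) hi]
    rfl
  · rintro ⟨h0, h⟩ i
    induction i with
    | zero => exact fun _ => h0.symm
    | succ i ih =>
      intro hi
      rw [← h i (by lia), ← ih (by lia)]
      rfl

/-- If the transition probabilities do not depend on the history, the path measure is the law of
the trajectory driven by independent moves `f (n, u)`, where `f (n, u)` has law `p u ·`. -/
lemma exists_isPathMeasure (G : StochGame V) (σ1 : Strategy G G.V1) (σ2 : Strategy G G.V2)
    (v : V) (p : V → V → ℝ) (hp : ∀ h u u', G.step σ1 σ2 h u u' = p u u')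
    (hsum : ∀ u, ∑ u', p u u' = 1) : ∃ μ, G.IsPathMeasure σ1 σ2 v μ := by
  have hp0 : ∀ u u', 0 ≤ p u u' := fun u u' => hp [] u u' ▸ step_nonneg _ _ _ _ _ _
  let P : V → PMF V := fun u => PMF.ofFintype (fun u' => ENNReal.ofReal (p u u')) (by
    rw [← ENNReal.ofReal_sum_of_nonneg fun i _ => hp0 u i, hsum, ENNReal.ofReal_one])
  let ν : Measure (ℕ × V → V) := Measure.infinitePi fun i : ℕ × V => (P i.2).toMeasure
  have hcyl : ∀ n (w : ℕ → V), MeasurableSet (cyl n w) := by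
    intro n w
    have : cyl n w = ⋂ i : ℕ, ⋂ _ : i ≤ n, {ω : ℕ → V | ω i = w i} := by
      ext ω
      simp [cyl]
    rw [this]
    exact MeasurableSet.iInter fun i => MeasurableSet.iInter fun _ => measurableSet_coord i _
  refine ⟨ν.map (traj v), Measure.isProbabilityMeasure_map (measurable_traj v).aemeasurable,
    fun n w => ?_⟩
  rw [Measure.map_apply (measurable_traj v) (hcyl n w)]
  unfold prefixProb
  by_cases h0 : w 0 = v
  · let s : Finset (ℕ × V) := (Finset.range n).image fun i => (i, w i)
    have hset : traj v ⁻¹' cyl n w = Set.pi s fun i : ℕ × V => {w (i.1 + 1)} := by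
      ext f
      rw [Set.mem_preimage, mem_cyl_traj_iff]
      simp [h0, s, Set.mem_pi]
    rw [hset, Measure.infinitePi_pi _ fun _ _ => measurableSet_singleton _,
      Finset.prod_image fun i _ j _ h => congrArg Prod.fst h, if_pos h0, one_mul,
      ENNReal.ofReal_prod_of_nonneg fun i _ => step_nonneg _ _ _ _ _ _]
    refine Finset.prod_congr rfl fun i _ => ?_
    rw [hp, PMF.toMeasure_apply_singleton _ _ (measurableSet_singleton _)]
    rfl
  · have hset : traj v ⁻¹' cyl n w = ∅ := by
      ext f
      rw [Set.mem_preimage, mem_cyl_traj_iff]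
      simp [h0]
    rw [hset, if_neg h0]
    simp

/-! ### The two memoryless strategies -/

/-- The pure memoryless strategy that moves from `u` to `c u`. -/
noncomputable def pureStrategy (G : StochGame V) (P : Finset V) (c : V → V)
    (hc : ∀ u ∈ P, 0 < G.δ u (c u)) : Strategy G P where
  f _ u u' := if u' = c u then 1 else 0
  nonneg _ _ _ := by split_ifs <;> simp
  sum_one _ _ := by simp
  support _ u hu u' h := by
    split_ifs at h with h'
    · exact h' ▸ hc u hu
    · exact absurd h (lt_irrefl _)

/-- The set of successors of `u` as a finset. -/
noncomputable def succs (G : StochGame V) (u : V) : Finset V :=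
  Finset.univ.filter fun u' => 0 < G.δ u u'

lemma succs_card_pos (G : StochGame V) (u : V) : (0 : ℝ) < (G.succs u).card := by
  obtain ⟨u', h⟩ := G.post_nonempty u
  exact Nat.cast_pos.2 (Finset.card_pos.2 ⟨u', by simp [succs, h]⟩)

/-- The memoryless strategy that chooses uniformly among the successors. -/
noncomputable def uniformStrategy (G : StochGame V) (P : Finset V) : Strategy G P where
  f _ u u' := if u' ∈ G.succs u then ((G.succs u).card : ℝ)⁻¹ else 0
  nonneg _ _ _ := by split_ifs <;> simp
  sum_one _ u := by
    rw [← Finset.sum_filter, Finset.sum_const, nsmul_eq_mul]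
    simp only [Finset.filter_univ_mem]
    exact mul_inv_cancel₀ (succs_card_pos G u).ne'
  support _ u hu u' h := by
    split_ifs at h with h'
    · simpa [succs] using h'
    · exact absurd h (lt_irrefl _)

lemma fair_uniformStrategy (G : StochGame V) : G.Fair (uniformStrategy G G.V2) := by
  intro σ1 v μ hμ
  have := hμ.1
  rw [← mem_ae_iff_prob_eq_one (measurableSet_FP2 G)]
  have key : ∀ u u' : V, ∀ᵐ ω ∂μ, u ∈ G.V2 → u' ∈ G.post u → u ∈ infOcc ω → u' ∈ infOcc ω := by
    intro u u'
    by_cases hu : u ∈ G.V2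
    · by_cases hu' : u' ∈ G.post u
      · have h1 : u ∉ G.V1 := fun h => G.disj12 u ⟨h, hu⟩
        have hm : u' ∈ G.succs u := by simpa [succs, post] using hu'
        filter_upwards [ae_infOcc_of_step hμ (inv_pos.2 (succs_card_pos G u))
          (v := u) (v' := u') fun h => by simp [step, h1, hu, uniformStrategy, hm]]
          with ω hω _ _ using hω
      · exact Eventually.of_forall fun ω _ h => absurd h hu'
    · exact Eventually.of_forall fun ω h => absurd h hu
  have key' := ae_all_iff.2 fun u => ae_all_iff.2 (key u)
  filter_upwards [key'] with ω hω u hu hI u' hu' using hω u u' hu hu' hI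

/-! ### The two implications -/

lemma stopping_of_eq_univ (G : StochGame V)
    (hW : preStar G.forallPre {u | G.Terminal u} = Set.univ) : G.StoppingUnderFairness := by
  intro σ1 σ2 hfair v μ hμ
  have := hμ.1
  have hF : ∀ᵐ ω ∂μ, ω ∈ FP2 G :=
    (mem_ae_iff_prob_eq_one (measurableSet_FP2 G)).2 (hfair σ1 v μ hμ)
  have hP : ∀ u u' : V, ∀ᵐ ω ∂μ, u ∈ G.VP → u' ∈ G.post u → u ∈ infOcc ω → u' ∈ infOcc ω := by
    intro u u'
    by_cases hu : u ∈ G.VP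
    · by_cases hu' : u' ∈ G.post u
      · have h1 : u ∉ G.V1 := fun h => G.disj1P u ⟨h, hu⟩
        have h2 : u ∉ G.V2 := fun h => G.disj2P u ⟨h, hu⟩
        filter_upwards [ae_infOcc_of_step hμ (v := u) (v' := u') (p := G.δ u u') hu'
          fun h => by simp [step, h1, h2]]
          with ω hω _ _ using hω
      · exact Eventually.of_forall fun ω _ h => absurd h hu'
    · exact Eventually.of_forall fun ω h => absurd h hu
  have hP' := ae_all_iff.2 fun u => ae_all_iff.2 (hP u)
  have hR : ∀ᵐ ω ∂μ, ω ∈ ReachT G := by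
    filter_upwards [hF, hP', ae_step_pos hμ] with ω h1 h2 h3
    refine mem_reachT G hW (fun n => step_pos_imp G σ1 σ2 _ _ _ (h3 n)) ?_
    rintro u (hu | hu) hI u' hu'
    · exact h1 u hu hI u' hu'
    · exact h2 u u' hu hu' hI
  exact (measure_congr (eventuallyEq_univ.2 hR)).trans measure_univ

lemma eq_univ_of_stopping (G : StochGame V) (hG : G.StoppingUnderFairness) :
    preStar G.forallPre {u | G.Terminal u} = Set.univ := by
  set W := preStar G.forallPre {u | G.Terminal u} with hWdef
  by_contra hW
  obtain ⟨v₀, hv₀⟩ := (Set.ne_univ_iff_exists_notMem W).1 hW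
  have hcl : G.forallPre W ⊆ W := forallPre_preStar_subset G _
  -- outside `W`, Player 1 has a successor outside `W`
  have hc : ∀ u, ∃ u', 0 < G.δ u u' ∧ (u ∈ G.V1 → u ∉ W → u' ∉ W) := by
    intro u
    by_cases h : u ∈ G.V1 ∧ u ∉ W
    · have : ¬ G.post u ⊆ W := fun hs => h.2 (hcl (Or.inr ⟨h.1, hs⟩))
      obtain ⟨u', h1, h2⟩ := Set.not_subset.1 this
      exact ⟨u', h1, fun _ _ => h2⟩
    · obtain ⟨u', hu'⟩ := G.post_nonempty u
      exact ⟨u', hu', fun h1 h2 => absurd ⟨h1, h2⟩ h⟩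
  choose c hc1 hc2 using hc
  let σ1 := pureStrategy G G.V1 c fun u _ => hc1 u
  let σ2 := uniformStrategy G G.V2
  obtain ⟨μ, hμ⟩ := exists_isPathMeasure G σ1 σ2 v₀ (fun u u' => G.step σ1 σ2 [] u u')
    (fun h u u' => rfl) (fun u => by
      rcases G.cover u with h | h | h
      · simp only [step, h, if_true]
        exact σ1.sum_one _ _
      · have h1 : u ∉ G.V1 := fun h' => G.disj12 u ⟨h', h⟩
        simp only [step, h, h1, if_true, if_false]
        exact σ2.sum_one _ _
      · have h1 : u ∉ G.V1 := fun h' => G.disj1P u ⟨h', h⟩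
        have h2 : u ∉ G.V2 := fun h' => G.disj2P u ⟨h', h⟩
        simp only [step, h1, h2, if_false]
        exact G.prob u h)
  have hμ1 := hμ.1
  have hstay : ∀ᵐ ω ∂μ, ω ∉ ReachT G := by
    filter_upwards [ae_start hμ, ae_step_pos hμ] with ω h0 hs
    have hall : ∀ n, ω n ∉ W := by
      intro n
      induction n with
      | zero => rwa [h0]
      | succ n ih =>
        have hsn := hs n
        by_cases h1 : ω n ∈ G.V1
        · simp only [step, h1, if_true, σ1, pureStrategy] at hsn
          split_ifs at hsn with h
          · rw [h]
            exact hc2 _ h1 ih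
          · exact absurd hsn (lt_irrefl _)
        · have h2 : ω n ∈ G.V2 ∨ ω n ∈ G.VP := (G.cover (ω n)).resolve_left h1
          intro hmem
          exact ih (hcl (Or.inl ⟨h2, (deltaSet_pos_iff _ _ _).2
            ⟨_, hmem, step_pos_imp G σ1 σ2 _ _ _ hsn⟩⟩))
    rintro ⟨n, hn⟩
    exact hall n (subset_preStar _ _ hn)
  have h1 := hG σ1 σ2 (fair_uniformStrategy G) v₀ μ hμ
  rw [measure_eq_zero_iff_ae_notMem.2 hstay] at h1
  exact zero_ne_one h1

end StochGame


open StochGame in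
/-- `G` is stopping under fairness iff `∃Pre*_f(V ∖ ∀Pre*_f(T)) = ∅`. -/
theorem stoppingUnderFairness_iff_existsPreStar_empty
    {V : Type*} [Fintype V] [DecidableEq V] [MeasurableSpace V] [DiscreteMeasurableSpace V]
    (G : StochGame V) :
    G.StoppingUnderFairness ↔
      preStar G.existsPre (Set.univ \ preStar G.forallPre {u | G.Terminal u}) = ∅ := by
  rw [existsPreStar_compl_eq_empty_iff]
  exact ⟨eq_univ_of_stopping G, stopping_of_eq_univ G⟩
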